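/- Almost no subset of {0, 1, …, N} is a genuine sumset: there exist constants c > 0 and K > 0 such that for all N ∈ ℕ, the number of sets A ⊆ {0, 1, …, N} for which there exist B, C ⊆ {0, 1, …, N} with |B| ≥ 2, |C| ≥ 2 and A = B + C (sumset) is at most K · 2^N · exp(−cN). -/

import Mathlib

open Pointwise

/-!
Let `A = B + C ⊆ {0, …, n - 1}`. If `c, c + d ∈ C`, then `A` contains a translate of
`B ∪ (d + B)`, so that `2 |Aᶜ| + 2 |B| + |B ∆ (d + B)| ≤ 2 n` and one of these three sets has at
most `2 n / 5` elements. Only an exponentially small proportion of the subsets of `{0, …, n - 1}`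
are that small, and each of the three determines `A` once `C` and `d` are known, because
`B ↦ B ∆ (d + B)` is injective for `d ≠ 0`. This suffices when `C ⊆ {0, …, k - 1}` for a small
constant multiple `k` of `n`, since there are then only `2 ^ k` choices of `C`.

If neither `B` nor `C` lies in `{0, …, k - 1}`, then each `x` in the middle range `[k, n - k)` has
at least `k` potential representations `b + c`. All but a proportion `(3 / 4) ^ k` of the pairs
`(B, C)` realize one of them, whereas `A` misses some such `x` unless `Aᶜ` is small.
-/

open Finset
open scoped symmDiff

section PowersetCounting

variable {α : Type*}

theorem sum_powerset_pow_card_inter [DecidableEq α] {R : Type*} [CommSemiring R]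
    {S J : Finset α} (hJ : J ⊆ S) (q : R) :
    ∑ B ∈ S.powerset, q ^ #(B ∩ J) = 2 ^ #(S \ J) * (1 + q) ^ #J := by
  calc ∑ B ∈ S.powerset, q ^ #(B ∩ J)
      = ∑ B ∈ S.powerset, ∏ j ∈ B, if j ∈ J then q else 1 := by
        simp only [prod_ite_mem, prod_const]
    _ = ∏ j ∈ S, (1 + if j ∈ J then q else 1) := (prod_one_add S).symm
    _ = (∏ j ∈ S \ J, (1 + if j ∈ J then q else 1)) * ∏ j ∈ J, (1 + if j ∈ J then q else 1) :=
        (prod_sdiff hJ).symm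
    _ = 2 ^ #(S \ J) * (1 + q) ^ #J := by
        congr 1
        · refine prod_eq_pow_card fun j hj => ?_
          rw [if_neg (mem_sdiff.1 hj).2, one_add_one_eq_two]
        · exact prod_eq_pow_card fun j hj => by rw [if_pos hj]

theorem card_filter_powerset_card_le (S : Finset α) (k : ℕ) :
    (#{B ∈ S.powerset | #B ≤ k} : ℝ) ≤ 2 ^ k * (3 / 2) ^ #S := by
  classical
  have hweight : #{B ∈ S.powerset | #B ≤ k} * (1 / 2 : ℝ) ^ k ≤ (3 / 2) ^ #S := by
    calc #{B ∈ S.powerset | #B ≤ k} * (1 / 2 : ℝ) ^ k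
        = ∑ B ∈ S.powerset with #B ≤ k, (1 / 2 : ℝ) ^ k := by rw [sum_const, nsmul_eq_mul]
      _ ≤ ∑ B ∈ S.powerset with #B ≤ k, (1 / 2 : ℝ) ^ #B :=
          sum_le_sum fun B hB =>
            pow_le_pow_of_le_one (by norm_num) (by norm_num) (mem_filter.1 hB).2
      _ ≤ ∑ B ∈ S.powerset, (1 / 2 : ℝ) ^ #B :=
          sum_le_sum_of_subset_of_nonneg (filter_subset _ _) fun _ _ _ => by positivity
      _ = ∑ B ∈ S.powerset, (1 / 2 : ℝ) ^ #(B ∩ S) :=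
          sum_congr rfl fun B hB => by rw [inter_eq_left.2 (mem_powerset.1 hB)]
      _ = (3 / 2) ^ #S := by
          rw [sum_powerset_pow_card_inter Subset.rfl, sdiff_self, bot_eq_empty, card_empty]
          norm_num
  rwa [one_div, inv_pow, ← div_eq_mul_inv, div_le_iff₀' (by positivity)] at hweight

end PowersetCounting

section ExponentialBounds

theorem two_pow_div_le_exp (n m : ℕ) : (2 : ℝ) ^ (n / m) ≤ Real.exp (n / m) := by
  calc (2 : ℝ) ^ (n / m) ≤ Real.exp 1 ^ (n / m) := by
        gcongr
        linarith [Real.add_one_le_exp (1 : ℝ)]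
    _ = Real.exp (n / m : ℕ) := by rw [← Real.exp_nat_mul, mul_one]
    _ ≤ Real.exp (n / m) := Real.exp_le_exp.2 Nat.cast_div_le

theorem three_quarters_pow_div_le_exp (n : ℕ) {m : ℕ} (hm : 0 < m) :
    (3 / 4 : ℝ) ^ (n / m) ≤ 4 / 3 * Real.exp (-n / (4 * m)) := by
  have hdiv : (n : ℝ) / m ≤ (n / m + 1 : ℕ) := by
    rw [div_le_iff₀ (by positivity)]
    exact_mod_cast (Nat.lt_div_mul_add hm).le.trans_eq (by ring)
  have hbase : (3 / 4 : ℝ) ≤ Real.exp (-1 / 4) := by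
    linarith [Real.add_one_le_exp (-1 / 4 : ℝ)]
  calc (3 / 4 : ℝ) ^ (n / m) = 4 / 3 * (3 / 4) ^ (n / m + 1) := by ring
    _ ≤ 4 / 3 * Real.exp (-1 / 4) ^ (n / m + 1) := by gcongr
    _ = 4 / 3 * Real.exp (-(n / m + 1 : ℕ) / 4) := by rw [← Real.exp_nat_mul]; ring_nf
    _ ≤ 4 / 3 * Real.exp (-(n / m) / 4) := by gcongr
    _ = 4 / 3 * Real.exp (-n / (4 * m)) := by ring_nf

theorem sq_mul_exp_neg_le {x c : ℝ} (hx : 0 ≤ x) (hc : 0 < c) :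
    x ^ 2 * Real.exp (-(2 * c * x)) ≤ 2 / c ^ 2 * Real.exp (-(c * x)) := by
  have hsq : x ^ 2 ≤ 2 / c ^ 2 * Real.exp (c * x) := by
    have := Real.pow_div_factorial_le_exp (c * x) (by positivity) 2
    rw [mul_pow, Nat.factorial_two, Nat.cast_two, div_le_iff₀ two_pos] at this
    rw [div_mul_eq_mul_div, le_div_iff₀ (by positivity)]
    linarith
  calc x ^ 2 * Real.exp (-(2 * c * x))
      ≤ 2 / c ^ 2 * Real.exp (c * x) * Real.exp (-(2 * c * x)) := by gcongr
    _ = 2 / c ^ 2 * Real.exp (-(c * x)) := by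
        rw [mul_assoc, ← Real.exp_add]
        ring_nf

end ExponentialBounds

section MissedSums

variable {M : Type*} [Add M] [IsRightCancelAdd M] [DecidableEq M] {S T J : Finset M} {x : M}

theorem card_filter_powerset_notMem_add_le {B : Finset M} (hBT : ∀ b ∈ B, ∃ c ∈ T, b + c = x) :
    (#{C ∈ T.powerset | x ∉ B + C} : ℝ) ≤ 2 ^ #T * (1 / 2) ^ #B := by
  choose! f hfT hfx using hBT
  have hf : Set.InjOn f B := fun a ha b hb hab =>
    add_right_cancel <| (hfx a ha).trans <| by rw [hab, hfx b hb]
  have himage : B.image f ⊆ T := image_subset_iff.2 hfT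
  have hcard : #(B.image f) = #B := card_image_of_injOn hf
  have hsub : {C ∈ T.powerset | x ∉ B + C} ⊆ (T \ B.image f).powerset := by
    intro C hC
    obtain ⟨hCT, hxC⟩ := mem_filter.1 hC
    refine mem_powerset.2 <| subset_sdiff.2 ⟨mem_powerset.1 hCT, disjoint_left.2 ?_⟩
    rintro c hc hcf
    obtain ⟨b, hb, rfl⟩ := mem_image.1 hcf
    exact hxC <| hfx b hb ▸ add_mem_add hb hc
  calc (#{C ∈ T.powerset | x ∉ B + C} : ℝ)
      ≤ #(T \ B.image f).powerset := mod_cast card_le_card hsub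
    _ = 2 ^ (#T - #B) := by rw [card_powerset, card_sdiff_of_subset himage, hcard]; norm_cast
    _ = 2 ^ #T * (1 / 2) ^ #B := by
        rw [pow_sub₀ _ two_ne_zero (hcard ▸ card_le_card himage), one_div, inv_pow]

theorem card_filter_powerset_add_powerset_notMem_le (hJS : J ⊆ S)
    (hJT : ∀ j ∈ J, ∃ c ∈ T, j + c = x) :
    (#{A ∈ S.powerset + T.powerset | x ∉ A} : ℝ) ≤ 2 ^ #S * 2 ^ #T * (3 / 4) ^ #J := by
  have himage : {A ∈ S.powerset + T.powerset | x ∉ A} ⊆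
      S.powerset.biUnion fun B => {C ∈ T.powerset | x ∉ B + C}.image (B + ·) := by
    intro A hA
    obtain ⟨hA, hxA⟩ := mem_filter.1 hA
    obtain ⟨B, hB, C, hC, rfl⟩ := mem_add.1 hA
    exact mem_biUnion.2 ⟨B, hB, mem_image_of_mem _ (mem_filter.2 ⟨hC, hxA⟩)⟩
  have hfiber (B : Finset M) :
      (#({C ∈ T.powerset | x ∉ B + C}.image (B + ·)) : ℝ) ≤ 2 ^ #T * (1 / 2) ^ #(B ∩ J) := by
    have hmono : {C ∈ T.powerset | x ∉ B + C} ⊆ {C ∈ T.powerset | x ∉ B ∩ J + C} :=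
      monotone_filter_right _ fun C _ hx hxJ => hx (add_subset_add_right inter_subset_left hxJ)
    calc (#({C ∈ T.powerset | x ∉ B + C}.image (B + ·)) : ℝ)
        ≤ #{C ∈ T.powerset | x ∉ B ∩ J + C} :=
          mod_cast card_image_le.trans (card_le_card hmono)
      _ ≤ 2 ^ #T * (1 / 2) ^ #(B ∩ J) :=
          card_filter_powerset_notMem_add_le fun b hb => hJT b (mem_inter.1 hb).2
  calc (#{A ∈ S.powerset + T.powerset | x ∉ A} : ℝ)
      ≤ ∑ B ∈ S.powerset, (#({C ∈ T.powerset | x ∉ B + C}.image (B + ·)) : ℝ) :=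
        mod_cast (card_le_card himage).trans card_biUnion_le
    _ ≤ ∑ B ∈ S.powerset, 2 ^ #T * (1 / 2 : ℝ) ^ #(B ∩ J) := sum_le_sum fun B _ => hfiber B
    _ = 2 ^ #S * 2 ^ #T * (3 / 4) ^ #J := by
        rw [← mul_sum, sum_powerset_pow_card_inter hJS,
          ← card_sdiff_add_card_eq_card hJS, pow_add,
          show (3 / 4 : ℝ) = (1 + 1 / 2) * 2⁻¹ by norm_num, mul_pow, inv_pow]
        field_simp

end MissedSums

section Translates

theorem card_symmDiff_add_card_add_card {α : Type*} [DecidableEq α] (s t : Finset α) :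
    #(s ∆ t) + (#s + #t) = 2 * #(s ∪ t) := by
  have hunion : #(s ∪ t) = #(s ∆ t) + #(s ∩ t) := by
    rw [← card_union_of_disjoint (t := s ∩ t) (disjoint_symmDiff_inf s t)]
    exact congrArg card (symmDiff_sup_inf s t).symm
  have := card_union_add_card_inter s t
  omega

variable {M : Type*} [AddCommMonoid M]

theorem eq_empty_of_vadd_eq_self [LinearOrder M] [IsOrderedCancelAddMonoid M] {d : M}
    (hd : 0 < d) {D : Finset M} (hD : d +ᵥ D = D) : D = ∅ := by
  by_contra hne
  have hmax := D.max'_mem (nonempty_iff_ne_empty.2 hne)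
  have hmem : d +ᵥ D.max' _ ∈ D := hD ▸ vadd_mem_vadd_finset hmax
  exact (lt_add_of_pos_left _ hd).not_ge (D.le_max' _ hmem)

theorem symmDiff_vadd_injective [LinearOrder M] [IsOrderedCancelAddMonoid M] {d : M}
    (hd : 0 < d) : Function.Injective fun B : Finset M => B ∆ (d +ᵥ B) := by
  intro B B' (h : B ∆ (d +ᵥ B) = B' ∆ (d +ᵥ B'))
  have hvadd : d +ᵥ B ∆ B' = B ∆ B' := by
    calc d +ᵥ B ∆ B' = (d +ᵥ B) ∆ (d +ᵥ B') :=
          image_symmDiff B B' (add_right_injective d)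
      _ = B ∆ B' := by
          rw [← symmDiff_eq_bot, symmDiff_comm, symmDiff_symmDiff_symmDiff_comm, h, symmDiff_self]
  exact symmDiff_eq_bot.1 (eq_empty_of_vadd_eq_self hd hvadd)

variable [IsLeftCancelAdd M] [DecidableEq M] {B C U : Finset M} {c d : M}

theorem card_union_vadd_le_card_add (hc : c ∈ C) (hcd : c + d ∈ C) :
    #(B ∪ (d +ᵥ B)) ≤ #(B + C) := by
  rw [← card_image_of_injective (B ∪ (d +ᵥ B)) (add_right_injective c)]
  refine card_le_card <| image_subset_iff.2 fun y hy => ?_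
  rw [add_comm B C]
  rcases mem_union.1 hy with hy | hy
  · exact add_mem_add hc hy
  · obtain ⟨b, hb, rfl⟩ := mem_vadd_finset.1 hy
    rw [vadd_eq_add, ← add_assoc]
    exact add_mem_add hcd hb

theorem two_mul_card_sdiff_add_add_card_symmDiff_vadd_le (hU : B + C ⊆ U) (hc : c ∈ C)
    (hcd : c + d ∈ C) :
    2 * #(U \ (B + C)) + 2 * #B + #(B ∆ (d +ᵥ B)) ≤ 2 * #U := by
  have hvadd : #(d +ᵥ B) = #B := card_image_of_injective B (add_right_injective d)
  have hsymm := card_symmDiff_add_card_add_card B (d +ᵥ B)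
  have hunion := card_union_vadd_le_card_add (B := B) hc hcd
  have hsdiff := card_sdiff_add_card_eq_card hU
  omega

end Translates

/-- The subsets of `{0, …, n - 1}` with at most `2 n / 5` elements. With this threshold,
`2 a + 2 b + s ≤ 2 n` forces one of `a`, `b`, `s` to be at most `2 n / 5`. -/
def sparseSubsets (n : ℕ) : Finset (Finset ℕ) :=
  {S ∈ (range n).powerset | #S ≤ 2 * n / 5}

/-- The sets `B ⊆ {0, …, n - 1}` for which `B ∆ (d + B)` is a sparse subset of
`{0, …, n - 1}`. -/
def sparseShiftSubsets (n d : ℕ) : Finset (Finset ℕ) :=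
  {B ∈ (range n).powerset | B ∆ (d +ᵥ B) ∈ sparseSubsets n}

/-- The subsets of `{0, …, n - 1}` with sparse complement. -/
def cosparseSubsets (n : ℕ) : Finset (Finset ℕ) :=
  (sparseSubsets n).image (range n \ ·)

/-- The sumsets `B + C` with `C ⊆ {0, …, k - 1}` such that `B` or `B ∆ (d + B)`, for some
`0 < d < k`, is a sparse subset of `{0, …, n - 1}`. -/
def narrowSumsets (n k : ℕ) : Finset (Finset ℕ) :=
  (sparseSubsets n ∪ (Ioo 0 k).biUnion (sparseShiftSubsets n)) + (range k).powerset

/-- The sumsets `B + C` with `B ⊆ {0, …, n - 1 - t}` and `C ⊆ {0, …, t}` for some `t` with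
`k ≤ t < n - k` that miss an element of the middle range `[k, n - k)`. -/
def gappySumsets (n k : ℕ) : Finset (Finset ℕ) :=
  (Ico k (n - k)).biUnion fun t => (Ico k (n - k)).biUnion fun x =>
    {A ∈ (range (n - t)).powerset + (range (t + 1)).powerset | x ∉ A}

/-- A family containing every genuine sumset in `{0, …, n - 1}` as soon as `5 k ≤ n`. -/
def sumsetCover (n k : ℕ) : Finset (Finset ℕ) :=
  cosparseSubsets n ∪ narrowSumsets n k ∪ gappySumsets n k

section Covering

variable {n k : ℕ} {A B C : Finset ℕ}

theorem mem_sparseSubsets {S : Finset ℕ} :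
    S ∈ sparseSubsets n ↔ S ⊆ range n ∧ #S ≤ 2 * n / 5 := by
  rw [sparseSubsets, mem_filter, mem_powerset]

theorem mem_cosparseSubsets (hA : A ⊆ range n) (hcard : #(range n \ A) ≤ 2 * n / 5) :
    A ∈ cosparseSubsets n :=
  mem_image.2 ⟨range n \ A, mem_sparseSubsets.2 ⟨sdiff_subset, hcard⟩,
    Finset.sdiff_sdiff_eq_self hA⟩

theorem exists_mem_add_mem_of_two_le_card (hC : 2 ≤ #C) : ∃ c d, 0 < d ∧ c ∈ C ∧ c + d ∈ C := by
  obtain ⟨c, hc, c', hc', hlt⟩ := (one_lt_card_iff_nontrivial.1 hC).exists_lt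
  exact ⟨c, c' - c, Nat.sub_pos_of_lt hlt, hc, by rwa [Nat.add_sub_cancel' hlt.le]⟩

theorem add_lt_of_add_subset_range {b c : ℕ} (hA : B + C ⊆ range n) (hb : b ∈ B) (hc : c ∈ C) :
    b + c < n :=
  mem_range.1 (hA (add_mem_add hb hc))

theorem mem_cosparseSubsets_or_mem_narrowSumsets (hA : B + C ⊆ range n) (hC : 2 ≤ #C)
    (hCk : C ⊆ range k) : B + C ∈ cosparseSubsets n ∨ B + C ∈ narrowSumsets n k := by
  obtain ⟨c, d, hd, hc, hcd⟩ := exists_mem_add_mem_of_two_le_card hC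
  have hBn : B ⊆ range n := fun b hb =>
    mem_range.2 <| (Nat.le_add_right b c).trans_lt (add_lt_of_add_subset_range hA hb hc)
  have hsymm : B ∆ (d +ᵥ B) ⊆ range n := by
    refine symmDiff_le_sup.trans (union_subset hBn fun y hy => ?_)
    obtain ⟨b, hb, rfl⟩ := mem_vadd_finset.1 hy
    have := add_lt_of_add_subset_range hA hb hcd
    rw [mem_range, vadd_eq_add]
    omega
  have hdk : d ∈ Ioo 0 k := by
    have := mem_range.1 (hCk hcd)
    rw [mem_Ioo]
    omega
  have hnarrow (h : B ∈ sparseSubsets n ∪ (Ioo 0 k).biUnion (sparseShiftSubsets n)) :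
      B + C ∈ narrowSumsets n k := add_mem_add h (mem_powerset.2 hCk)
  have hsum := two_mul_card_sdiff_add_add_card_symmDiff_vadd_le hA hc hcd
  rw [card_range] at hsum
  obtain hcompl | hB | hshift : #(range n \ (B + C)) ≤ 2 * n / 5 ∨ #B ≤ 2 * n / 5 ∨
      #(B ∆ (d +ᵥ B)) ≤ 2 * n / 5 := by omega
  · exact Or.inl (mem_cosparseSubsets hA hcompl)
  · exact Or.inr (hnarrow (mem_union_left _ (mem_sparseSubsets.2 ⟨hBn, hB⟩)))
  · refine Or.inr (hnarrow (mem_union_right _ (mem_biUnion.2 ⟨d, hdk, mem_filter.2 ?_⟩)))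
    exact ⟨mem_powerset.2 hBn, mem_sparseSubsets.2 ⟨hsymm, hshift⟩⟩

theorem exists_mem_Ico_notMem (hA : 2 * k < #(range n \ A)) : ∃ x ∈ Ico k (n - k), x ∉ A := by
  by_contra! h
  have hsub : range n \ A ⊆ range k ∪ Ico (n - k) n := by
    intro x hx
    obtain ⟨hxn, hxA⟩ := mem_sdiff.1 hx
    have hxI : x ∉ Ico k (n - k) := mt (h x) hxA
    simp only [mem_union, mem_range, mem_Ico] at hxn hxI ⊢
    omega
  have := (card_le_card hsub).trans (card_union_le _ _)
  rw [card_range, Nat.card_Ico] at this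
  omega

theorem mem_cosparseSubsets_or_mem_gappySumsets (hk : 5 * k ≤ n) (hA : B + C ⊆ range n)
    (hB : ¬B ⊆ range k) (hC : ¬C ⊆ range k) :
    B + C ∈ cosparseSubsets n ∨ B + C ∈ gappySumsets n k := by
  refine or_iff_not_imp_left.2 fun hcosparse => ?_
  obtain ⟨x, hx, hxA⟩ : ∃ x ∈ Ico k (n - k), x ∉ B + C := by
    have hcompl := not_le.1 (mt (mem_cosparseSubsets hA) hcosparse)
    exact exists_mem_Ico_notMem (by omega)
  obtain ⟨b, hb, hkb⟩ := not_subset.1 hB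
  obtain ⟨c, hc, hkc⟩ := not_subset.1 hC
  set t := C.max' ⟨c, hc⟩
  have hadd_lt (b' : ℕ) (hb' : b' ∈ B) : b' + t < n :=
    add_lt_of_add_subset_range hA hb' (C.max'_mem _)
  have ht : t ∈ Ico k (n - k) := by
    have hct : c ≤ t := C.le_max' c hc
    have hbt := hadd_lt b hb
    rw [mem_range] at hkb hkc
    rw [mem_Ico]
    omega
  have hBt : B ⊆ range (n - t) := fun b' hb' => mem_range.2 (Nat.lt_sub_of_add_lt (hadd_lt b' hb'))
  have hCt : C ⊆ range (t + 1) := fun c' hc' => mem_range.2 (Nat.lt_succ_of_le (C.le_max' c' hc'))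
  exact mem_biUnion.2 ⟨t, ht, mem_biUnion.2 ⟨x, hx, mem_filter.2
    ⟨add_mem_add (mem_powerset.2 hBt) (mem_powerset.2 hCt), hxA⟩⟩⟩

theorem add_mem_sumsetCover (hk : 5 * k ≤ n) (hA : B + C ⊆ range n) (hB : 2 ≤ #B) (hC : 2 ≤ #C) :
    B + C ∈ sumsetCover n k := by
  rw [sumsetCover, mem_union, mem_union]
  by_cases hCk : C ⊆ range k
  · exact Or.inl (mem_cosparseSubsets_or_mem_narrowSumsets hA hC hCk)
  by_cases hBk : B ⊆ range k
  · rw [add_comm B C] at hA ⊢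
    exact Or.inl (mem_cosparseSubsets_or_mem_narrowSumsets hA hB hBk)
  exact (mem_cosparseSubsets_or_mem_gappySumsets hk hA hBk hCk).imp_left Or.inl

end Covering

section Counting

theorem card_sparseSubsets_le (n : ℕ) :
    (#(sparseSubsets n) : ℝ) ≤ 2 ^ n * Real.exp (-n / 100) := by
  have hbase : (4 : ℝ) ≤ (4 / 3 * Real.exp (-1 / 100)) ^ 5 := by
    have hexp := Real.add_one_le_exp (-1 / 20 : ℝ)
    rw [mul_pow, ← Real.exp_nat_mul]
    norm_num at hexp ⊢
    linarith
  have hpow : (2 : ℝ) ^ (2 * n / 5) ≤ (4 / 3 * Real.exp (-1 / 100)) ^ n := by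
    refine le_of_pow_le_pow_left₀ (n := 5) (by norm_num) (by positivity) ?_
    calc ((2 : ℝ) ^ (2 * n / 5)) ^ 5 ≤ 2 ^ (2 * n) := by
          rw [← pow_mul]
          exact pow_le_pow_right₀ one_le_two (Nat.div_mul_le_self _ _)
      _ = 4 ^ n := by rw [pow_mul]; norm_num
      _ ≤ ((4 / 3 * Real.exp (-1 / 100)) ^ 5) ^ n := by gcongr
      _ = ((4 / 3 * Real.exp (-1 / 100)) ^ n) ^ 5 := pow_right_comm _ _ _
  calc (#(sparseSubsets n) : ℝ) ≤ 2 ^ (2 * n / 5) * (3 / 2) ^ #(range n) :=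
        card_filter_powerset_card_le (range n) (2 * n / 5)
    _ ≤ (4 / 3 * Real.exp (-1 / 100)) ^ n * (3 / 2) ^ n := by
        rw [card_range]
        gcongr
    _ = 2 ^ n * Real.exp (-n / 100) := by
        rw [← mul_pow, show -(n : ℝ) / 100 = n * (-1 / 100) by ring, Real.exp_nat_mul, ← mul_pow]
        ring

theorem card_sparseShiftSubsets_le (n : ℕ) {d : ℕ} (hd : 0 < d) :
    #(sparseShiftSubsets n d) ≤ #(sparseSubsets n) :=
  card_le_card_of_injOn _ (fun _ hB => (mem_filter.1 hB).2) (symmDiff_vadd_injective hd).injOn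

theorem card_narrowSumsets_le (n k : ℕ) :
    #(narrowSumsets n k) ≤ (k + 1) * 2 ^ k * #(sparseSubsets n) := by
  have hshift : #((Ioo 0 k).biUnion (sparseShiftSubsets n)) ≤ k * #(sparseSubsets n) :=
    calc #((Ioo 0 k).biUnion (sparseShiftSubsets n)) ≤ #(Ioo 0 k) * #(sparseSubsets n) :=
          card_biUnion_le_card_mul _ _ _ fun _ hd =>
            card_sparseShiftSubsets_le n (mem_Ioo.1 hd).1
      _ ≤ k * #(sparseSubsets n) := by
          gcongr
          rw [Nat.card_Ioo]
          omega
  calc #(narrowSumsets n k)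
      ≤ #(sparseSubsets n ∪ (Ioo 0 k).biUnion (sparseShiftSubsets n)) * #(range k).powerset :=
        card_add_le
    _ ≤ (#(sparseSubsets n) + k * #(sparseSubsets n)) * 2 ^ k := by
        rw [card_powerset, card_range]
        gcongr
        exact (card_union_le _ _).trans (Nat.add_le_add_left hshift _)
    _ = (k + 1) * 2 ^ k * #(sparseSubsets n) := by ring

theorem card_filter_powerset_range_add_notMem_le {n k t x : ℕ} (ht : t ∈ Ico k (n - k))
    (hx : x ∈ Ico k (n - k)) :
    (#{A ∈ (range (n - t)).powerset + (range (t + 1)).powerset | x ∉ A} : ℝ) ≤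
      2 * 2 ^ n * (3 / 4) ^ k := by
  rw [mem_Ico] at ht hx
  have hJS : Ico (x - t) (x - t + k) ⊆ range (n - t) := by
    intro j hj
    rw [mem_Ico] at hj
    rw [mem_range]
    omega
  have hJT : ∀ j ∈ Ico (x - t) (x - t + k), ∃ c ∈ range (t + 1), j + c = x := by
    intro j hj
    rw [mem_Ico] at hj
    exact ⟨x - j, mem_range.2 (by omega), by omega⟩
  refine (card_filter_powerset_add_powerset_notMem_le hJS hJT).trans_eq ?_
  rw [card_range, card_range, Nat.card_Ico, ← pow_add, show n - t + (t + 1) = n + 1 by omega,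
    Nat.add_sub_cancel_left, pow_succ']

theorem card_gappySumsets_le (n k : ℕ) :
    (#(gappySumsets n k) : ℝ) ≤ n ^ 2 * (2 * 2 ^ n * (3 / 4) ^ k) := by
  have hcard : (#(Ico k (n - k)) : ℝ) ≤ n := by
    rw [Nat.card_Ico]
    exact_mod_cast (by omega : n - k - k ≤ n)
  calc (#(gappySumsets n k) : ℝ)
      ≤ ∑ t ∈ Ico k (n - k), ∑ x ∈ Ico k (n - k),
          (#{A ∈ (range (n - t)).powerset + (range (t + 1)).powerset | x ∉ A} : ℝ) :=
        mod_cast card_biUnion_le.trans (sum_le_sum fun _ _ => card_biUnion_le)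
    _ ≤ ∑ t ∈ Ico k (n - k), ∑ x ∈ Ico k (n - k), 2 * 2 ^ n * (3 / 4 : ℝ) ^ k :=
        sum_le_sum fun _ ht => sum_le_sum fun _ hx =>
          card_filter_powerset_range_add_notMem_le ht hx
    _ = #(Ico k (n - k)) ^ 2 * (2 * 2 ^ n * (3 / 4 : ℝ) ^ k) := by
        simp only [sum_const, nsmul_eq_mul]
        ring
    _ ≤ n ^ 2 * (2 * 2 ^ n * (3 / 4) ^ k) := by gcongr

theorem card_narrowSumsets_le_mul_exp {n : ℕ} (hn : 0 < n) :
    (#(narrowSumsets n (n / 200)) : ℝ) ≤ n * (2 ^ n * Real.exp (-n / 200)) := by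
  calc (#(narrowSumsets n (n / 200)) : ℝ)
      ≤ (n / 200 + 1 : ℕ) * 2 ^ (n / 200) * #(sparseSubsets n) :=
        mod_cast card_narrowSumsets_le n (n / 200)
    _ ≤ n * Real.exp (n / 200) * (2 ^ n * Real.exp (-n / 100)) := by
        gcongr
        · omega
        · exact two_pow_div_le_exp n 200
        · exact card_sparseSubsets_le n
    _ = n * (2 ^ n * Real.exp (-n / 200)) := by
        rw [show -(n : ℝ) / 200 = n / 200 + -n / 100 by ring, Real.exp_add]
        ring

theorem card_gappySumsets_le_mul_exp (n : ℕ) :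
    (#(gappySumsets n (n / 200)) : ℝ) ≤ 8 / 3 * n ^ 2 * (2 ^ n * Real.exp (-n / 800)) := by
  calc (#(gappySumsets n (n / 200)) : ℝ) ≤ n ^ 2 * (2 * 2 ^ n * (3 / 4) ^ (n / 200)) :=
        card_gappySumsets_le n (n / 200)
    _ ≤ n ^ 2 * (2 * 2 ^ n * (4 / 3 * Real.exp (-n / (4 * (200 : ℕ))))) := by
        gcongr
        exact three_quarters_pow_div_le_exp n (by norm_num)
    _ = 8 / 3 * n ^ 2 * (2 ^ n * Real.exp (-n / 800)) := by
        push_cast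
        ring_nf

theorem card_sumsetCover_le {n : ℕ} (hn : 0 < n) :
    (#(sumsetCover n (n / 200)) : ℝ) ≤ 5 * n ^ 2 * (2 ^ n * Real.exp (-n / 800)) := by
  have hn1 : (1 : ℝ) ≤ n := mod_cast hn
  have hcosparse : (#(cosparseSubsets n) : ℝ) ≤ n ^ 2 * (2 ^ n * Real.exp (-n / 800)) :=
    calc (#(cosparseSubsets n) : ℝ) ≤ #(sparseSubsets n) := mod_cast card_image_le
      _ ≤ 1 * (2 ^ n * Real.exp (-n / 100)) := by simpa using card_sparseSubsets_le n
      _ ≤ n ^ 2 * (2 ^ n * Real.exp (-n / 800)) := by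
          gcongr ?_ * (2 ^ n * Real.exp ?_)
          · exact one_le_pow₀ hn1
          · linarith
  have hnarrow : (#(narrowSumsets n (n / 200)) : ℝ) ≤ n ^ 2 * (2 ^ n * Real.exp (-n / 800)) := by
    refine (card_narrowSumsets_le_mul_exp hn).trans ?_
    gcongr ?_ * (2 ^ n * Real.exp ?_)
    · exact le_self_pow₀ hn1 two_ne_zero
    · linarith
  have hunion : (#(sumsetCover n (n / 200)) : ℝ) ≤
      #(cosparseSubsets n) + #(narrowSumsets n (n / 200)) + #(gappySumsets n (n / 200)) :=
    mod_cast (card_union_le _ _).trans (Nat.add_le_add_right (card_union_le _ _) _)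
  have hgappy := card_gappySumsets_le_mul_exp n
  have : 0 ≤ n ^ 2 * (2 ^ n * Real.exp (-n / 800)) := by positivity
  linarith

end Counting

/-- Almost no subset of `{0, …, N}` is a genuine sumset: the number of
`A ⊆ {0, …, N}` of the form `A = B + C` with `|B|, |C| ≥ 2` is at most
`K · 2^N · exp(-cN)` for absolute constants `c, K > 0`. -/
theorem almost_no_genuine_sumsets :
    ∃ c : ℝ, 0 < c ∧ ∃ K : ℝ, 0 < K ∧ ∀ N : ℕ,
      ({A : Finset ℕ | A ⊆ Finset.range (N + 1) ∧
          ∃ B C : Finset ℕ, B ⊆ Finset.range (N + 1) ∧ C ⊆ Finset.range (N + 1) ∧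
            2 ≤ B.card ∧ 2 ≤ C.card ∧ A = B + C}.ncard : ℝ) ≤
        K * 2 ^ N * Real.exp (-c * N) := by
  refine ⟨1 / 1600, by norm_num, 20 * 1600 ^ 2, by norm_num, fun N => ?_⟩
  calc _ ≤ (#(sumsetCover (N + 1) ((N + 1) / 200)) : ℝ) := by
        rw [← Set.ncard_coe_finset]
        refine mod_cast Set.ncard_le_ncard ?_ (finite_toSet _)
        rintro _ ⟨hA, B, C, -, -, hB, hC, rfl⟩
        exact add_mem_sumsetCover (by omega) hA hB hC
    _ ≤ 5 * (N + 1 : ℕ) ^ 2 * (2 ^ (N + 1) * Real.exp (-(N + 1 : ℕ) / 800)) :=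
        card_sumsetCover_le N.succ_pos
    _ = 10 * 2 ^ N * ((N + 1 : ℕ) ^ 2 * Real.exp (-(2 * (1 / 1600) * (N + 1 : ℕ)))) := by ring_nf
    _ ≤ 10 * 2 ^ N * (2 / (1 / 1600) ^ 2 * Real.exp (-(1 / 1600 * (N + 1 : ℕ)))) := by
        gcongr 10 * 2 ^ N * ?_
        exact sq_mul_exp_neg_le (Nat.cast_nonneg _) (by norm_num)
    _ ≤ 10 * 2 ^ N * (2 / (1 / 1600) ^ 2 * Real.exp (-(1 / 1600) * N)) := by
        gcongr 10 * 2 ^ N * (2 / (1 / 1600) ^ 2 * Real.exp ?_)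
        push_cast
        linarith
    _ = 20 * 1600 ^ 2 * 2 ^ N * Real.exp (-(1 / 1600) * N) := by ring
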